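/- The total number of sibling portraits (allowing polygons mapping with any degree) of an n-gon inside a round gap of degree i equals the number of one-to-one sibling portraits of an (n+1)-gon in a round gap of degree i; that is, F(i,n) = f(i,n+1) = binomial((n+1)·i, i)/(n·i + 1). -/

import Mathlib

/-- Cyclic displacement (number of steps counterclockwise) from `a` to `x` among
`m` marked points on the circle. -/
def arcPos {m : ℕ} (a x : Fin m) : ℕ := (x.val + m - a.val) % m

/-- `t` lies strictly between `p` and `q` in counterclockwise cyclic order. -/
def CycBtw {m : ℕ} (p t q : Fin m) : Prop := 0 < arcPos p t ∧ arcPos p t < arcPos p q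

/-- `q` is the next vertex of `S` counterclockwise after `p`. -/
def IsNext {m : ℕ} (S : Finset (Fin m)) (p q : Fin m) : Prop :=
  p ∈ S ∧ q ∈ S ∧ p ≠ q ∧ ∀ r ∈ S, ¬ CycBtw p r q

/-- The label of a marked point: the points are cyclically labeled by repetitions
of the word `x_0 x_1 … x_{n-1}`. -/
def label (n : ℕ) {m : ℕ} (p : Fin m) : ZMod n := (p.val : ZMod n)

/-- `S` is a polygon visiting the labels in positive (counterclockwise) cyclic
order, i.e. its boundary maps forward as a positively oriented covering of the
boundary of the `n`-gon. -/
def IsPosPolygon (n : ℕ) {m : ℕ} (S : Finset (Fin m)) : Prop :=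
  2 ≤ S.card ∧ n ∣ S.card ∧ ∀ p q, IsNext S p q → label n q = label n p + 1

/-- Two vertex sets cross (link) on the circle. -/
def Crosses {m : ℕ} (S T : Finset (Fin m)) : Prop :=
  ∃ p ∈ S, ∃ q ∈ S, ∃ r ∈ T, ∃ s ∈ T, CycBtw p r q ∧ CycBtw q s p

/-- A sibling portrait of the `n`-gon in a round gap of degree `D`: a collection of
pairwise disjoint, non-crossing, positively oriented polygons using all `D*n`
preimage points (so that together `D` sides map to each side of the `n`-gon). -/
def IsPortrait (D n : ℕ) (PP : Finset (Finset (Fin (D * n)))) : Prop :=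
  (∀ S ∈ PP, IsPosPolygon n S) ∧
  (∀ S ∈ PP, ∀ T ∈ PP, S ≠ T → Disjoint S T ∧ ¬ Crosses S T) ∧
  (∀ p : Fin (D * n), ∃ S ∈ PP, p ∈ S)


open Finset in
/-- fibre count -/
def cntF (μ : ℕ → ℕ) (m y : ℕ) : ℕ := ((Finset.range m).filter (fun z => μ z = y)).card

def NiceF (m : ℕ) (μ : ℕ → ℕ) : Prop :=
  (∀ x < m, μ x ≤ x ∧ μ (μ x) = μ x) ∧
  (∀ x z, z < m → μ x < μ z → μ z < x → x < z → False)

theorem cntF_succ (μ : ℕ → ℕ) (m y : ℕ) :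
    cntF μ (m+1) y = cntF μ m y + if μ m = y then 1 else 0 := by
  unfold cntF
  rw [Finset.range_add_one, Finset.filter_insert]
  split_ifs with h
  · rw [Finset.card_insert_of_notMem (by simp)]
  · simp

theorem cntF_mono (μ : ℕ → ℕ) {i j : ℕ} (h : i ≤ j) (y : ℕ) : cntF μ i y ≤ cntF μ j y := by
  unfold cntF
  apply Finset.card_le_card
  intro z hz
  simp only [Finset.mem_filter, Finset.mem_range] at hz ⊢
  exact ⟨by omega, hz.2⟩

theorem cntF_congr (μ ν : ℕ → ℕ) (m y : ℕ) (h : ∀ z < m, μ z = ν z) : cntF μ m y = cntF ν m y := by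
  unfold cntF
  congr 1
  apply Finset.filter_congr
  intro z hz
  rw [h z (Finset.mem_range.1 hz)]

theorem cntF_pos {μ : ℕ → ℕ} {m z : ℕ} (h : z < m) : 0 < cntF μ m (μ z) := by
  unfold cntF
  exact Finset.card_pos.2 ⟨z, by simp [h]⟩

theorem exists_of_cntF_lt {μ : ℕ → ℕ} {i j y : ℕ} (h : cntF μ i y < cntF μ j y) :
    ∃ z, i ≤ z ∧ z < j ∧ μ z = y := by
  by_contra hc
  push Not at hc
  apply absurd h
  rw [not_lt]
  unfold cntF
  apply Finset.card_le_card
  intro z hz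
  simp only [Finset.mem_filter, Finset.mem_range] at hz ⊢
  refine ⟨?_, hz.2⟩
  by_contra h1
  exact hc z (by omega) hz.1 hz.2

theorem cntF_eq_zero {μ : ℕ → ℕ} {m y : ℕ} (h : ∀ z < m, μ z ≠ y) : cntF μ m y = 0 := by
  unfold cntF
  rw [Finset.card_eq_zero, Finset.filter_eq_empty_iff]
  intro z hz
  exact h z (Finset.mem_range.1 hz)

theorem sum_cntF (μ : ℕ → ℕ) (m j : ℕ) :
    ∑ y ∈ Finset.range j, cntF μ m y = ((Finset.range m).filter (fun z => μ z < j)).card := by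
  rw [Finset.card_eq_sum_card_fiberwise (f := μ) (t := Finset.range j)]
  · apply Finset.sum_congr rfl
    intro y hy
    unfold cntF
    congr 1
    ext z
    simp only [Finset.mem_filter, Finset.mem_range] at *
    grind
  · intro z hz
    simp at hz ⊢
    exact hz.2

theorem niceF_aux {m : ℕ} {μ ν : ℕ → ℕ} (hμ : NiceF m μ) (hν : NiceF m ν)
    (h : ∀ y, cntF μ m y = cntF ν m y) (x : ℕ) (hx : x < m) (ih : ∀ z < x, μ z = ν z) :
    ¬ μ x < ν x := by
  intro hlt
  have hle := (hν.1 x hx).1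
  rcases hle.lt_or_eq with h1 | h1
  · have e1 : cntF μ x (ν x) = cntF ν x (ν x) := cntF_congr _ _ _ _ ih
    have e2 : cntF ν x (ν x) < cntF ν (x+1) (ν x) := by rw [cntF_succ]; simp
    have e3 := cntF_mono ν (show x+1 ≤ m from hx) (ν x)
    have e4 := h (ν x)
    obtain ⟨z, hz1, hz2, hz3⟩ := exists_of_cntF_lt (μ := μ) (i := x) (j := m) (y := ν x) (by omega)
    have : z ≠ x := by rintro rfl; omega
    exact hμ.2 x z hz2 (by omega) (by omega) (by omega)
  · have e := cntF_pos (μ := ν) hx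
    rw [← h, h1] at e
    have : cntF μ 0 x < cntF μ m x := by simpa [cntF] using e
    obtain ⟨z, hz1, hz2, hz3⟩ := exists_of_cntF_lt this
    have := (hμ.1 z hz2).2
    rw [hz3] at this
    omega

theorem niceF_uniq {m : ℕ} {μ ν : ℕ → ℕ} (hμ : NiceF m μ) (hν : NiceF m ν)
    (h : ∀ y, cntF μ m y = cntF ν m y) (x : ℕ) : x < m → μ x = ν x := by
  induction x using Nat.strong_induction_on with
  | _ x ih =>
    intro hx
    have ih' : ∀ z < x, μ z = ν z := fun z hz => ih z hz (by omega)
    have h1 := niceF_aux hμ hν h x hx ih'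
    have h2 := niceF_aux hν hμ (fun y => (h y).symm) x hx (fun z hz => (ih' z hz).symm)
    omega

theorem niceF_ballot {m : ℕ} {μ : ℕ → ℕ} (hμ : NiceF m μ) {j : ℕ} (hj : j ≤ m) :
    j ≤ ∑ y ∈ Finset.range j, cntF μ m y := by
  rw [sum_cntF]
  conv_lhs => rw [← Finset.card_range j]
  apply Finset.card_le_card
  intro z hz
  simp only [Finset.mem_filter, Finset.mem_range] at hz ⊢
  have := (hμ.1 z (by omega)).1
  omega

theorem niceF_total {m : ℕ} {μ : ℕ → ℕ} (hμ : ∀ x < m, μ x ≤ x) :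
    ∑ y ∈ Finset.range m, cntF μ m y = m := by
  rw [sum_cntF, Finset.filter_true_of_mem, Finset.card_range]
  intro z hz
  have := hμ z (Finset.mem_range.1 hz)
  simp at hz
  omega

def RuleF (a μ : ℕ → ℕ) (x : ℕ) : Prop :=
  μ x ≤ x ∧ cntF μ x (μ x) < a (μ x) ∧ ∀ y, μ x < y → y ≤ x → a y ≤ cntF μ x y

theorem RuleF_congr {a μ ν : ℕ → ℕ} {x : ℕ} (h : ∀ z ≤ x, μ z = ν z) (hr : RuleF a μ x) :
    RuleF a ν x := by
  have hc : ∀ y, cntF μ x y = cntF ν x y := fun y => cntF_congr _ _ _ _ (fun z hz => h z hz.le)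
  unfold RuleF at *
  simpa only [hc, h x le_rfl] using hr

theorem exists_rule {a : ℕ → ℕ} {m : ℕ} (ha : ∀ j ≤ m, j ≤ ∑ p ∈ Finset.range j, a p) (k : ℕ) :
    k ≤ m → ∃ μ : ℕ → ℕ, ∀ x < k, RuleF a μ x := by
  induction k with
  | zero => intro _; exact ⟨id, by simp⟩
  | succ k ih =>
    intro hk
    obtain ⟨μ, hμ⟩ := ih (by omega)
    have hle : ∑ y ∈ Finset.range (k+1), cntF μ k y ≤ k := by
      rw [sum_cntF]
      exact (Finset.card_filter_le _ _).trans (by simp)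
    have hlt : ∑ y ∈ Finset.range (k+1), cntF μ k y < ∑ y ∈ Finset.range (k+1), a y :=
      lt_of_le_of_lt hle (ha (k+1) hk)
    obtain ⟨y, hy, hy2⟩ := Finset.exists_lt_of_sum_lt hlt
    set s := (Finset.range (k+1)).filter (fun y => cntF μ k y < a y) with hs
    have hne : s.Nonempty := ⟨y, by simp only [hs, Finset.mem_filter]; exact ⟨hy, hy2⟩⟩
    set w := s.max' hne with hw
    have hws : w ∈ s := s.max'_mem hne
    simp only [hs, Finset.mem_filter, Finset.mem_range] at hws
    refine ⟨Function.update μ k w, ?_⟩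
    intro x hx
    rcases Nat.lt_succ_iff_lt_or_eq.1 hx with h1 | rfl
    · refine RuleF_congr ?_ (hμ x h1)
      intro z hz
      rw [Function.update_of_ne (by omega)]
    · have hc : ∀ y, cntF (Function.update μ x w) x y = cntF μ x y := fun y =>
        cntF_congr _ _ _ _ (fun z hz => by rw [Function.update_of_ne (by omega)])
      unfold RuleF
      simp only [hc, Function.update_self]
      refine ⟨by omega, hws.2, ?_⟩
      intro y hy1 hy2
      by_contra hcon
      have : y ≤ w := s.le_max' y (by simp only [hs, Finset.mem_filter, Finset.mem_range]; omega)
      omega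

theorem exists_niceF {a : ℕ → ℕ} {m : ℕ} (ha : ∀ j ≤ m, j ≤ ∑ p ∈ Finset.range j, a p)
    (hs : ∑ p ∈ Finset.range m, a p = m) :
    ∃ μ, NiceF m μ ∧ ∀ y < m, cntF μ m y = a y := by
  obtain ⟨μ, hμ⟩ := exists_rule ha m le_rfl
  have hle : ∀ j ≤ m, ∀ y, cntF μ j y ≤ a y := by
    intro j
    induction j with
    | zero => intro _ y; simp [cntF]
    | succ j ih =>
      intro hj y
      rw [cntF_succ]
      have h1 := ih (by omega) y
      split_ifs with h
      · have := (hμ j (by omega)).2.1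
        rw [h] at this; omega
      · omega
  refine ⟨μ, ⟨?_, ?_⟩, ?_⟩
  · intro x hx
    refine ⟨(hμ x hx).1, ?_⟩
    have hx1 := hμ x hx
    have hy := hμ (μ x) (by have := hx1.1; omega)
    by_contra hne
    have h0 : cntF μ (μ x) (μ x) = 0 := by
      apply cntF_eq_zero
      intro z hz
      have := (hμ z (by have := hx1.1; omega)).1
      omega
    have := hy.2.2 (μ x) (by have := hy.1; omega) le_rfl
    have := hx1.2.1
    omega
  · intro x z hz h1 h2 h3
    have e1 := (hμ x (by omega)).2.2 (μ z) h1 h2.le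
    have e2 := cntF_mono μ h3.le (μ z)
    have e3 := (hμ z hz).2.1
    omega
  · have ht := niceF_total (m := m) (μ := μ) (fun x hx => (hμ x hx).1)
    have := (Finset.sum_eq_sum_iff_of_le (s := Finset.range m) (f := fun y => cntF μ m y) (g := a)
      (fun y _ => hle m le_rfl y)).1 (by rw [ht, hs])
    intro y hy
    exact this y (Finset.mem_range.2 hy)

def consN (b : ℕ) (a : ℕ → ℕ) : ℕ → ℕ
  | 0 => b
  | p+1 => a p

open Classical in
noncomputable def GS (A : ℕ → Prop) : ℕ → ℕ → Finset (ℕ → ℕ)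
  | 0, h => if h = 0 then {fun _ => 0} else ∅
  | m+1, h => ((Finset.range (m+2)).filter (fun b => A b ∧ 1 ≤ h + b)).biUnion
      (fun b => (GS A m (h+b-1)).image (consN b))

theorem consN_eta (a : ℕ → ℕ) : consN (a 0) (fun p => a (p+1)) = a := by
  funext p; cases p <;> rfl

theorem consN_inj (b : ℕ) : Function.Injective (consN b) := by
  intro a a' h
  funext p
  exact congrFun h (p+1)

theorem mem_GS (A : ℕ → Prop) (m : ℕ) : ∀ (h : ℕ) (a : ℕ → ℕ), a ∈ GS A m h ↔
    (∀ p < m, A (a p)) ∧ (∀ p, m ≤ p → a p = 0) ∧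
    (∀ j ≤ m, j ≤ h + ∑ p ∈ Finset.range j, a p) ∧ h + ∑ p ∈ Finset.range m, a p = m := by
  induction m with
  | zero =>
    intro h a
    unfold GS
    split_ifs with hh
    · subst hh
      simp
      constructor
      · rintro rfl; simp
      · intro h1; funext p; exact h1 p
    · simp [hh]
  | succ m ih =>
    intro h a
    unfold GS
    simp only [Finset.mem_biUnion, Finset.mem_filter, Finset.mem_range, Finset.mem_image]
    constructor
    · rintro ⟨b, ⟨hb1, hA, hb2⟩, a', ha', rfl⟩
      rw [ih] at ha'
      obtain ⟨h1, h2, h3, h4⟩ := ha'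
      refine ⟨?_, ?_, ?_, ?_⟩
      · rintro (_ | p) hp
        · exact hA
        · exact h1 p (by omega)
      · rintro (_ | p) hp
        · omega
        · exact h2 p (by omega)
      · rintro (_ | j) hj
        · omega
        · rw [Finset.sum_range_succ']
          have := h3 j (by omega)
          simp only [consN]
          omega
      · rw [Finset.sum_range_succ']
        simp only [consN]
        omega
    · rintro ⟨h1, h2, h3, h4⟩
      rw [Finset.sum_range_succ'] at h4
      have h30 := h3 1 (by omega)
      simp at h30
      refine ⟨a 0, ⟨by omega, h1 0 (by omega), h30⟩, fun p => a (p+1), ?_, consN_eta a⟩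
      rw [ih]
      refine ⟨fun p hp => h1 _ (by omega), fun p hp => h2 _ (by omega), ?_, by omega⟩
      intro j hj
      have := h3 (j+1) (by omega)
      rw [Finset.sum_range_succ'] at this
      omega

theorem GS_empty (A : ℕ → Prop) (m h : ℕ) (hh : m < h) : (GS A m h).card = 0 := by
  rw [Finset.card_eq_zero, Finset.eq_empty_iff_forall_notMem]
  intro a ha
  rw [mem_GS] at ha
  omega

open Classical in
theorem card_GS (A : ℕ → Prop) (m h : ℕ) : (GS A (m+1) h).card =
    ∑ b ∈ Finset.range (m+2), if A b ∧ 1 ≤ h + b then (GS A m (h+b-1)).card else 0 := by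
  rw [GS, Finset.card_biUnion, Finset.sum_filter]
  · apply Finset.sum_congr rfl
    intro b _
    rw [Finset.card_image_of_injective _ (consN_inj b)]
  · intro b _ b' _ hne
    simp only [Function.onFun]
    rw [Finset.disjoint_left]
    intro a ha ha'
    simp only [Finset.mem_image] at ha ha'
    obtain ⟨c, _, rfl⟩ := ha
    obtain ⟨c', _, h'⟩ := ha'
    exact hne (congrFun h' 0).symm

/-- ballot numbers -/
def VB (n r : ℕ) : ℕ → ℤ
  | 0 => 1
  | u+1 => ((r+u+1).choose (u+1) : ℤ) - n * ((r+u+1).choose u : ℤ)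

theorem VB_rec (n r u : ℕ) : VB n (r+1) (u+1) = VB n r (u+1) + VB n (r+1) u := by
  cases u with
  | zero => simp [VB]; ring
  | succ u =>
    simp only [VB]
    have e1 : r + 1 + (u+1) + 1 = (r + u + 2) + 1 := by ring
    have e2 : r + (u+1) + 1 = r+u+2 := by ring
    have e3 : r + 1 + u + 1 = r+u+2 := by ring
    rw [e1, e2, e3, Nat.choose_succ_succ (r+u+2) (u+1), Nat.choose_succ_succ (r+u+2) u]
    push_cast
    ring

theorem VB_sum (n r u : ℕ) : ∑ j ∈ Finset.range (u+1), VB n r j = VB n (r+1) u := by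
  induction u with
  | zero => simp [VB]
  | succ u ih => rw [Finset.sum_range_succ, ih, VB_rec]; ring

theorem VB_zero (n r u : ℕ) (h : r + 1 = n * u) : VB n r u = 0 := by
  cases u with
  | zero => omega
  | succ u =>
    simp only [VB]
    have := Nat.choose_succ_right_eq (r+u+1) u
    have e : r + u + 1 - u = n * (u+1) := by omega
    rw [e] at this
    have h2 : (u+1 : ℤ) * (((r+u+1).choose (u+1) : ℤ) - n * ((r+u+1).choose u : ℤ)) = 0 := by
      have : ((r+u+1).choose (u+1) : ℤ) * (u+1) = (r+u+1).choose u * (n * (u+1)) := by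
        exact_mod_cast this
      linear_combination this
    rcases mul_eq_zero.1 h2 with h3 | h3
    · omega
    · exact h3

theorem VB_final (n i : ℕ) : ((n * i + 1 : ℕ) : ℤ) * VB n (n*i) i = (((n+1)*i).choose i : ℤ) := by
  cases i with
  | zero => simp [VB]
  | succ u =>
    simp only [VB]
    have := Nat.choose_succ_right_eq (n*(u+1)+u+1) u
    have e : n*(u+1) + u + 1 - u = n * (u+1) + 1 := by omega
    rw [e] at this
    have e2 : (n+1)*(u+1) = n*(u+1)+u+1 := by ring
    rw [e2]
    have : ((n*(u+1)+u+1).choose (u+1) : ℤ) * (u+1) = (n*(u+1)+u+1).choose u * (n * (u+1) + 1) := by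
      exact_mod_cast this
    push_cast
    linear_combination n * this

theorem card_GS_dvd (n : ℕ) (hn : 1 ≤ n) (m : ℕ) : ∀ h u, m = h + n * u →
    ((GS (fun b => n ∣ b) m h).card : ℤ) = VB n m u := by
  induction m with
  | zero =>
    intro h u e
    have h0 : h = 0 := by omega
    have : n * u = 0 := by omega
    have u0 : u = 0 := by rcases Nat.mul_eq_zero.1 this with h | h <;> omega
    subst h0 u0
    simp [GS, VB]
  | succ m ih =>
    intro h u e
    classical
    rw [card_GS]
    have hsub : (Finset.range (u+1)).image (fun k => n * k) ⊆ Finset.range (m+2) := by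
      intro b hb
      simp only [Finset.mem_image, Finset.mem_range] at hb ⊢
      obtain ⟨k, hk, rfl⟩ := hb
      have : n * k ≤ n * u := Nat.mul_le_mul_left _ (by omega)
      omega
    rw [← Finset.sum_subset hsub, Finset.sum_image, ← VB_sum, ← Finset.sum_range_reflect]
    · push_cast
      apply Finset.sum_congr rfl
      intro k hk
      simp only [Finset.mem_range] at hk
      have hsp : n * u = n * k + n * (u - k) := by rw [← Nat.mul_add]; congr 1; omega
      split_ifs with hc
      · exact_mod_cast ih _ k (by omega)
      · have : ¬ 1 ≤ h + n * (u-k) := fun hh => hc ⟨dvd_mul_right _ _, hh⟩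
        rw [VB_zero]
        omega
    · intro a _ b _ hab
      exact Nat.eq_of_mul_eq_mul_left (by omega) hab
    · intro b hb hb2
      split_ifs with hc
      · obtain ⟨⟨k, rfl⟩, h1⟩ := hc
        apply GS_empty
        have : ¬ k < u + 1 := by
          intro hk
          apply hb2
          exact Finset.mem_image.2 ⟨k, Finset.mem_range.2 hk, rfl⟩
        have : n * (u+1) ≤ n * k := Nat.mul_le_mul_left _ (by omega)
        rw [Nat.mul_add] at this
        omega
      · rfl

theorem card_GS_one (n : ℕ) (m : ℕ) : ∀ h u r, m = h + (n+1) * u → m = r + u →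
    ((GS (fun b => b = 0 ∨ b = n+1) m h).card : ℤ) = VB n r u := by
  induction m with
  | zero =>
    intro h u r e e2
    have h0 : h = 0 := by omega
    have u0 : u = 0 := by omega
    subst h0 u0
    simp [GS, VB]
  | succ m ih =>
    intro h u r e e2
    have key : (GS (fun b => b = 0 ∨ b = n+1) (m+1) h).card =
        (if 1 ≤ h then (GS (fun b => b = 0 ∨ b = n+1) m (h-1)).card else 0) +
        (GS (fun b => b = 0 ∨ b = n+1) m (h+n)).card := by
      rw [card_GS]
      by_cases hnm : n + 1 < m + 2
      · rw [← Finset.sum_subset (s₁ := {0, n+1})]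
        · rw [Finset.sum_pair (by omega)]
          simp
        · intro b hb
          simp at hb ⊢
          omega
        · intro b _ hb
          simp at hb
          rw [if_neg]
          omega
      · rw [← Finset.sum_subset (s₁ := {0}), Finset.sum_singleton,
          GS_empty _ m (h+n) (by omega)]
        · simp
        · simp
        · intro b hb hb2
          simp at hb hb2
          rw [if_neg]
          omega
    rw [key]
    rw [Nat.succ_mul] at e
    cases u with
    | zero =>
      rw [if_pos (by omega), GS_empty _ m (h+n) (by omega)]
      have := ih (h-1) 0 (r-1) (by omega) (by omega)
      simpa [VB] using this
    | succ u =>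
      have e3 : n * (u+1) = n * u + n := by ring
      have hb := ih (h+n) u r (by rw [Nat.succ_mul]; omega) (by omega)
      cases r with
      | zero =>
        have : n * u + n = 0 := by omega
        have : n = 0 := by omega
        subst this
        rw [if_neg (by omega)]
        push_cast
        rw [hb]
        cases u <;> simp [VB]
      | succ r =>
        rw [VB_rec]
        push_cast
        rw [hb]
        congr 1
        split_ifs with hc
        · exact ih (h-1) (u+1) r (by rw [Nat.succ_mul]; omega) (by omega)
        · rw [VB_zero _ _ _ (by omega)]

theorem arcPos_eq {m : ℕ} (a x : Fin m) :
    arcPos a x = if a.val ≤ x.val then x.val - a.val else x.val + m - a.val := by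
  unfold arcPos
  have h1 := a.isLt
  have h2 := x.isLt
  split_ifs with h
  · have : x.val + m - a.val = (x.val - a.val) + m := by omega
    rw [this, Nat.add_mod_right, Nat.mod_eq_of_lt (by omega)]
  · rw [Nat.mod_eq_of_lt (by omega)]

theorem cycBtw_iff {m : ℕ} (p t q : Fin m) : CycBtw p t q ↔
    (p.val < t.val ∧ t.val < q.val) ∨ (t.val < q.val ∧ q.val < p.val) ∨
    (q.val < p.val ∧ p.val < t.val) := by
  unfold CycBtw
  rw [arcPos_eq, arcPos_eq]
  have h1 := p.isLt
  have h2 := t.isLt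
  have h3 := q.isLt
  split_ifs <;> omega

def GoodP (m : ℕ) (A : ℕ → Prop) (PP : Finset (Finset (Fin m))) : Prop :=
  (∀ S ∈ PP, S.Nonempty ∧ A S.card) ∧
  (∀ S ∈ PP, ∀ T ∈ PP, S ≠ T → Disjoint S T ∧ ¬ Crosses S T) ∧
  (∀ p : Fin m, ∃ S ∈ PP, p ∈ S)

theorem GoodP.eq_of_mem {m : ℕ} {A : ℕ → Prop} {PP : Finset (Finset (Fin m))} (h : GoodP m A PP)
    {S T : Finset (Fin m)} (hS : S ∈ PP) (hT : T ∈ PP) {x : Fin m} (h1 : x ∈ S) (h2 : x ∈ T) :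
    S = T := by
  by_contra hne
  exact Finset.disjoint_left.1 (h.2.1 S hS T hT hne).1 h1 h2

theorem card_fiber {m : ℕ} (μ : ℕ → ℕ) (c : ℕ) :
    ((Finset.univ : Finset (Fin m)).filter (fun y => μ y.val = c)).card = cntF μ m c := by
  unfold cntF
  rw [← Finset.card_map Fin.valEmbedding]
  congr 1
  ext z
  simp only [Finset.mem_map, Finset.mem_filter, Finset.mem_univ, true_and, Fin.valEmbedding_apply,
    Finset.mem_range]
  constructor
  · rintro ⟨y, hy, rfl⟩; exact ⟨y.isLt, hy⟩
  · rintro ⟨h1, h2⟩; exact ⟨⟨z, h1⟩, h2, rfl⟩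

def KerP {m : ℕ} (PP : Finset (Finset (Fin m))) (μ : ℕ → ℕ) : Prop :=
  ∀ x y : Fin m, (∃ S ∈ PP, x ∈ S ∧ y ∈ S) ↔ μ x.val = μ y.val

theorem GoodP.exists_mu {m : ℕ} {A : ℕ → Prop} {PP : Finset (Finset (Fin m))} (h : GoodP m A PP) :
    ∃ μ, NiceF m μ ∧ KerP PP μ := by
  classical
  let R : ℕ → Set ℕ := fun x => {y | ∃ (hx : x < m) (hy : y < m), ∃ S ∈ PP, (⟨x, hx⟩ : Fin m) ∈ S ∧ (⟨y, hy⟩ : Fin m) ∈ S}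
  have hself : ∀ x < m, x ∈ R x := by
    intro x hx
    obtain ⟨S, hS, hxS⟩ := h.2.2 ⟨x, hx⟩
    exact ⟨hx, hx, S, hS, hxS, hxS⟩
  have hRR : ∀ x y, y ∈ R x → R y = R x := by
    rintro x y ⟨hx, hy, S, hS, h1, h2⟩
    ext z
    constructor
    · rintro ⟨_, hz, T, hT, h3, h4⟩
      have := h.eq_of_mem hS hT h2 h3
      subst this
      exact ⟨hx, hz, S, hS, h1, h4⟩
    · rintro ⟨_, hz, T, hT, h3, h4⟩
      have := h.eq_of_mem hS hT h1 h3
      subst this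
      exact ⟨hy, hz, S, hS, h2, h4⟩
  let μ : ℕ → ℕ := fun x => sInf (R x)
  have hmem : ∀ x < m, μ x ∈ R x := fun x hx => Nat.sInf_mem ⟨x, hself x hx⟩
  have hle : ∀ x < m, μ x ≤ x := fun x hx => Nat.sInf_le (hself x hx)
  have hker : KerP PP μ := by
    intro x y
    constructor
    · rintro ⟨S, hS, h1, h2⟩
      have : y.val ∈ R x.val := ⟨x.isLt, y.isLt, S, hS, h1, h2⟩
      show sInf _ = sInf _
      rw [hRR _ _ this]
    · intro he
      have h1 := hRR _ _ (hmem x x.isLt)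
      have h2 := hRR _ _ (hmem y y.isLt)
      rw [← he, h1] at h2
      have h3 := hself y y.isLt
      rw [← h2] at h3
      obtain ⟨_, _, S, hS, h4, h5⟩ := h3
      exact ⟨S, hS, h4, h5⟩
  have hidem : ∀ x < m, μ (μ x) = μ x := by
    intro x hx
    show sInf (R (μ x)) = sInf (R x)
    rw [hRR _ _ (hmem x hx)]
  refine ⟨μ, ⟨fun x hx => ⟨hle x hx, hidem x hx⟩, ?_⟩, hker⟩
  intro x z hz h1 h2 h3
  have hx : x < m := by omega
  obtain ⟨_, hy, S, hS, h4, h5⟩ := hmem x hx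
  obtain ⟨_, hy', T, hT, h6, h7⟩ := hmem z hz
  have hne : S ≠ T := by
    rintro rfl
    have := (hker ⟨x, hx⟩ ⟨z, hz⟩).1 ⟨S, hS, h4, h6⟩
    simp only at this
    omega
  apply (h.2.1 S hS T hT hne).2
  refine ⟨_, h5, _, h4, _, h7, _, h6, ?_, ?_⟩
  · rw [cycBtw_iff]; simp only; omega
  · rw [cycBtw_iff]; simp only; omega

theorem niceF_ker_le {m : ℕ} {μ ν : ℕ → ℕ} (hμ : NiceF m μ) (hν : NiceF m ν)
    (h : ∀ x y, x < m → y < m → (μ x = μ y ↔ ν x = ν y)) (x : ℕ) (hx : x < m) : μ x ≤ ν x := by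
  have h1 := hν.1 x hx
  have h2 := (h (ν x) x (by omega) hx).2 h1.2
  rw [← h2]
  exact (hμ.1 (ν x) (by omega)).1

theorem KerP.mem_eq {m : ℕ} {A : ℕ → Prop} {PP : Finset (Finset (Fin m))} (h : GoodP m A PP)
    {μ : ℕ → ℕ} (hk : KerP PP μ) {S : Finset (Fin m)} (hS : S ∈ PP) {x : Fin m} (hx : x ∈ S) :
    S = (Finset.univ : Finset (Fin m)).filter (fun y => μ y.val = μ x.val) := by
  ext y
  simp only [Finset.mem_filter, Finset.mem_univ, true_and]
  rw [← hk y x]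
  constructor
  · intro hy; exact ⟨S, hS, hy, hx⟩
  · rintro ⟨T, hT, h1, h2⟩
    rw [h.eq_of_mem hS hT hx h2]; exact h1

theorem ker_sub {m : ℕ} {A : ℕ → Prop} {PP QQ : Finset (Finset (Fin m))} (h : GoodP m A PP)
    (h' : GoodP m A QQ) {μ ν : ℕ → ℕ} (hk : KerP PP μ) (hk' : KerP QQ ν)
    (he : ∀ x < m, μ x = ν x) : PP ⊆ QQ := by
  intro S hS
  obtain ⟨x, hx⟩ := (h.1 S hS).1
  obtain ⟨T, hT, hxT⟩ := h'.2.2 x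
  have e1 := hk.mem_eq h hS hx
  have e2 := hk'.mem_eq h' hT hxT
  have : S = T := by
    rw [e1, e2]
    apply Finset.filter_congr
    intro y _
    rw [he y y.isLt, he x x.isLt]
  rw [this]; exact hT

theorem niceF_four {m : ℕ} {μ : ℕ → ℕ} (hμ : NiceF m μ) {a b c d : ℕ} (hd : d < m)
    (hab : a < b) (hbc : b < c) (hcd : c < d) (h1 : μ a = μ c) (h2 : μ b = μ d) : μ a = μ b := by
  have ha := (hμ.1 a (by omega)).1
  have hb := (hμ.1 b (by omega)).1
  by_contra hne
  rcases lt_or_gt_of_ne hne with hlt | hlt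
  · exact hμ.2 c d hd (by omega) (by omega) hcd
  · exact hμ.2 b c (by omega) (by omega) (by omega) hbc

theorem exists_GoodP {m : ℕ} {A : ℕ → Prop} {μ : ℕ → ℕ} (hμ : NiceF m μ)
    (hA : ∀ y < m, A (cntF μ m y)) : ∃ PP, GoodP m A PP ∧ KerP PP μ := by
  classical
  let B : Fin m → Finset (Fin m) := fun x =>
    (Finset.univ : Finset (Fin m)).filter (fun y => μ y.val = μ x.val)
  have hB : ∀ x y, y ∈ B x ↔ μ y.val = μ x.val := by intro x y; simp [B]
  refine ⟨Finset.univ.image B, ⟨?_, ?_, ?_⟩, ?_⟩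
  · intro S hS
    obtain ⟨x, -, rfl⟩ := Finset.mem_image.1 hS
    refine ⟨⟨x, by rw [hB]⟩, ?_⟩
    show A (Finset.card (Finset.filter _ _))
    rw [card_fiber]
    apply hA
    have := (hμ.1 x x.isLt).1
    omega
  · intro S hS T hT hne
    obtain ⟨x, -, rfl⟩ := Finset.mem_image.1 hS
    obtain ⟨z, -, rfl⟩ := Finset.mem_image.1 hT
    have hne' : μ x.val ≠ μ z.val := by
      intro he
      apply hne
      ext y
      rw [hB, hB, he]
    constructor
    · rw [Finset.disjoint_left]
      intro y h1 h2
      rw [hB] at h1 h2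
      exact hne' (h1.symm.trans h2)
    · rintro ⟨p, hp, q, hq, r, hr, s, hs, h1, h2⟩
      rw [hB] at hp hq hr hs
      rw [cycBtw_iff] at h1 h2
      apply hne'
      have l1 := p.isLt
      have l2 := q.isLt
      have l3 := r.isLt
      have l4 := s.isLt
      have k1 : ∀ a b c d : Fin m, a.val < b.val → b.val < c.val → c.val < d.val →
        μ a = μ c → μ b = μ d → μ a = μ b := fun a b c d h1 h2 h3 h4 h5 =>
          niceF_four hμ d.isLt h1 h2 h3 h4 h5
      have a1 := k1 p r q s
      have a2 := k1 s p r q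
      have a3 := k1 r q s p
      have a4 := k1 q s p r
      by_contra hx
      grind
  · intro p
    exact ⟨B p, Finset.mem_image_of_mem _ (Finset.mem_univ _), by rw [hB]⟩
  · intro x y
    constructor
    · rintro ⟨S, hS, h1, h2⟩
      obtain ⟨z, -, rfl⟩ := Finset.mem_image.1 hS
      rw [hB] at h1 h2
      rw [h1, h2]
    · intro he
      exact ⟨B x, Finset.mem_image_of_mem _ (Finset.mem_univ _), by rw [hB], by rw [hB, he]⟩

theorem card_GoodP (m : ℕ) (A : ℕ → Prop) (h0 : A 0) :
    Nat.card {PP : Finset (Finset (Fin m)) // GoodP m A PP} = (GS A m 0).card := by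
  have hex : ∀ P : {PP : Finset (Finset (Fin m)) // GoodP m A PP}, ∃ μ, NiceF m μ ∧ KerP P.1 μ :=
    fun P => P.2.exists_mu
  choose M hM hK using hex
  have hz : ∀ P y, m ≤ y → cntF (M P) m y = 0 := by
    intro P y hy
    apply cntF_eq_zero
    intro z hz
    have := ((hM P).1 z hz).1
    omega
  have hmem : ∀ P, (fun y => cntF (M P) m y) ∈ GS A m 0 := by
    intro P
    rw [mem_GS]
    refine ⟨?_, hz P, ?_, ?_⟩
    · intro y hy
      by_cases hc : ∃ z < m, M P z = y
      · obtain ⟨z, hz, rfl⟩ := hc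
        obtain ⟨S, hS, hzS⟩ := P.2.2.2 ⟨z, hz⟩
        have e := (hK P).mem_eq P.2 hS hzS
        have := (P.2.1 S hS).2
        rw [e, card_fiber] at this
        exact this
      · push Not at hc
        rw [cntF_eq_zero hc]; exact h0
    · intro j hj
      rw [zero_add]
      exact niceF_ballot (hM P) hj
    · rw [zero_add]
      exact niceF_total (fun x hx => ((hM P).1 x hx).1)
  have hbij : Function.Bijective (fun P => (⟨fun y => cntF (M P) m y, hmem P⟩ : {a // a ∈ GS A m 0})) := by
    constructor
    · intro P Q hPQ
      have hc : ∀ y, cntF (M P) m y = cntF (M Q) m y := fun y => congrFun (congrArg Subtype.val hPQ) y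
      have he := niceF_uniq (hM P) (hM Q) hc
      apply Subtype.ext
      exact Finset.Subset.antisymm (ker_sub P.2 Q.2 (hK P) (hK Q) he)
        (ker_sub Q.2 P.2 (hK Q) (hK P) (fun x hx => (he x hx).symm))
    · rintro ⟨a, ha⟩
      have ha' := ha
      rw [mem_GS] at ha'
      obtain ⟨h1, h2, h3, h4⟩ := ha'
      simp only [zero_add] at h3 h4
      obtain ⟨μ, hμ, hc⟩ := exists_niceF h3 h4
      obtain ⟨PP, hP, hk⟩ := exists_GoodP (A := A) hμ (fun y hy => by rw [hc y hy]; exact h1 y hy)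
      refine ⟨⟨PP, hP⟩, ?_⟩
      have hker : ∀ x y, x < m → y < m → (M ⟨PP, hP⟩ x = M ⟨PP, hP⟩ y ↔ μ x = μ y) := by
        intro x y hx hy
        exact (hK ⟨PP, hP⟩ ⟨x, hx⟩ ⟨y, hy⟩).symm.trans (hk ⟨x, hx⟩ ⟨y, hy⟩)
      have heq : ∀ x < m, M ⟨PP, hP⟩ x = μ x := fun x hx =>
        le_antisymm (niceF_ker_le (hM _) hμ hker x hx)
          (niceF_ker_le hμ (hM _) (fun x y hx hy => (hker x y hx hy).symm) x hx)
      apply Subtype.ext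
      funext y
      show cntF (M ⟨PP, hP⟩) m y = a y
      rcases lt_or_ge y m with hy | hy
      · rw [cntF_congr _ _ _ _ heq, hc y hy]
      · rw [hz _ _ hy, h2 y hy]
  rw [Nat.card_eq_of_bijective _ hbij]
  simp

theorem card_btw {m : ℕ} (p q : Fin m) (hpq : p ≠ q) [DecidablePred fun t => CycBtw p t q] :
    ((Finset.univ : Finset (Fin m)).filter (fun t => CycBtw p t q)).card + 1 = arcPos p q := by
  have hinj : Function.Injective (fun t : Fin m => arcPos p t) := by
    intro a b hab
    simp only [arcPos_eq] at hab
    have h1 := a.isLt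
    have h2 := b.isLt
    have h3 := p.isLt
    apply Fin.ext
    split_ifs at hab <;> omega
  have hpos : 0 < arcPos p q := by
    rw [arcPos_eq]
    have h1 := q.isLt
    have h3 := p.isLt
    have : p.val ≠ q.val := fun h => hpq (Fin.ext h)
    split_ifs <;> omega
  have hlt : arcPos p q < m := by unfold arcPos; exact Nat.mod_lt _ (by have := p.isLt; omega)
  have : ((Finset.univ : Finset (Fin m)).filter (fun t => CycBtw p t q)).image (fun t => arcPos p t)
      = Finset.Ico 1 (arcPos p q) := by
    ext k
    simp only [Finset.mem_image, Finset.mem_filter, Finset.mem_univ, true_and, Finset.mem_Ico]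
    constructor
    · rintro ⟨t, ht, rfl⟩
      exact ht
    · rintro ⟨h1, h2⟩
      have h3 := p.isLt
      have : ∃ t : Fin m, arcPos p t = k := by
        by_cases hc : p.val + k < m
        · refine ⟨⟨p.val + k, hc⟩, ?_⟩
          rw [arcPos_eq]; simp
        · refine ⟨⟨p.val + k - m, by omega⟩, ?_⟩
          rw [arcPos_eq]; simp only; split_ifs <;> omega
      obtain ⟨t, ht⟩ := this
      exact ⟨t, ⟨by omega, by omega⟩, ht⟩
  rw [← Finset.card_image_of_injective _ hinj, this, Nat.card_Ico]
  omega

theorem label_auto {m n : ℕ} (hm : n ∣ m) {A : ℕ → Prop} (hA : ∀ s, A s → n ∣ s)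
    {PP : Finset (Finset (Fin m))} (h : GoodP m A PP) {S : Finset (Fin m)} (hS : S ∈ PP)
    (p q : Fin m) (hn : IsNext S p q) : label n q = label n p + 1 := by
  classical
  obtain ⟨hp, hq, hpq, hno⟩ := hn
  have hc := card_btw p q hpq
  have hU : (Finset.univ : Finset (Fin m)).filter (fun t => CycBtw p t q) =
      (PP.filter (fun T => ∃ t ∈ T, CycBtw p t q)).biUnion id := by
    ext t
    simp only [Finset.mem_filter, Finset.mem_univ, true_and, Finset.mem_biUnion, id]
    constructor
    · intro ht
      obtain ⟨T, hT, htT⟩ := h.2.2 t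
      exact ⟨T, ⟨hT, t, htT, ht⟩, htT⟩
    · rintro ⟨T, ⟨hT, r, hr, hr2⟩, ht⟩
      have hne : S ≠ T := by rintro rfl; exact hno r hr hr2
      obtain ⟨hd, hcr⟩ := h.2.1 S hS T hT hne
      by_contra hcon
      apply hcr
      refine ⟨p, hp, q, hq, r, hr, t, ht, hr2, ?_⟩
      have n1 : p.val ≠ t.val := fun e => Finset.disjoint_left.1 hd hp (by rwa [Fin.ext e])
      have n2 : q.val ≠ t.val := fun e => Finset.disjoint_left.1 hd hq (by rwa [Fin.ext e])
      have n3 : p.val ≠ q.val := fun e => hpq (Fin.ext e)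
      rw [cycBtw_iff] at hcon ⊢
      omega
  have hdvd : n ∣ ((Finset.univ : Finset (Fin m)).filter (fun t => CycBtw p t q)).card := by
    rw [hU, Finset.card_biUnion]
    · apply Finset.dvd_sum
      intro T hT
      exact hA _ (h.1 T (Finset.mem_filter.1 hT).1).2
    · intro T hT T' hT' hne
      exact (h.2.1 T (Finset.mem_filter.1 hT).1 T' (Finset.mem_filter.1 hT').1 hne).1
  have e1 : ((arcPos p q : ℕ) : ZMod n) = 1 := by
    rw [← hc]
    push_cast
    rw [(ZMod.natCast_eq_zero_iff _ _).2 hdvd]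
    simp
  have hm0 : ((m : ℕ) : ZMod n) = 0 := (ZMod.natCast_eq_zero_iff _ _).2 hm
  have e2 : ((arcPos p q + p.val : ℕ) : ZMod n) = (q.val : ZMod n) := by
    rw [arcPos_eq]
    have := p.isLt
    split_ifs with hh
    · congr 1; omega
    · have : q.val + m - p.val + p.val = q.val + m := by omega
      rw [this]; push_cast; rw [hm0, add_zero]
  unfold label
  rw [← e2]
  push_cast
  rw [e1, add_comm]

theorem portrait_iff (i n : ℕ) (hn : 2 ≤ n) (PP : Finset (Finset (Fin (i * n)))) :
    IsPortrait i n PP ↔ GoodP (i * n) (fun b => n ∣ b) PP := by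
  constructor
  · rintro ⟨h1, h2, h3⟩
    refine ⟨?_, h2, h3⟩
    intro S hS
    obtain ⟨a, b, _⟩ := h1 S hS
    exact ⟨Finset.card_pos.1 (by omega), b⟩
  · intro h
    refine ⟨?_, h.2.1, h.2.2⟩
    intro S hS
    obtain ⟨a, b⟩ := h.1 S hS
    have := Nat.le_of_dvd (Finset.card_pos.2 a) b
    exact ⟨by omega, b, fun p q hpq => label_auto (dvd_mul_left _ _) (fun s hs => hs) h hS p q hpq⟩

theorem portrait_iff_one (i n : ℕ) (hn : 2 ≤ n) (PP : Finset (Finset (Fin (i * (n+1))))) :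
    (IsPortrait i (n+1) PP ∧ ∀ S ∈ PP, S.card = n + 1) ↔
      GoodP (i * (n+1)) (fun b => b = 0 ∨ b = n+1) PP := by
  rw [portrait_iff i (n+1) (by omega)]
  constructor
  · rintro ⟨⟨h1, h2, h3⟩, h4⟩
    exact ⟨fun S hS => ⟨(h1 S hS).1, Or.inr (h4 S hS)⟩, h2, h3⟩
  · rintro ⟨h1, h2, h3⟩
    have h4 : ∀ S ∈ PP, S.card = n + 1 := by
      intro S hS
      obtain ⟨a, b⟩ := h1 S hS
      have := Finset.card_pos.2 a
      omega
    exact ⟨⟨fun S hS => ⟨(h1 S hS).1, by rw [h4 S hS]⟩, h2, h3⟩, h4⟩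

/-- The total number `F(i,n)` of sibling portraits of an `n`-gon in a
round gap of degree `i` (allowing polygons of any degree) equals the number
`f(i,n+1)` of one-to-one sibling portraits of an `(n+1)`-gon in a round gap of
degree `i`, which is the Fuss–Catalan number `((n+1)*i).choose i / (n*i + 1)`. -/
theorem card_all_portraits (i n : ℕ) (hi : 1 ≤ i) (hn : 2 ≤ n) :
    Nat.card {PP : Finset (Finset (Fin (i * n))) // IsPortrait i n PP} =
      Nat.card {QQ : Finset (Finset (Fin (i * (n + 1)))) //
        IsPortrait i (n + 1) QQ ∧ ∀ S ∈ QQ, S.card = n + 1} ∧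
    Nat.card {PP : Finset (Finset (Fin (i * n))) // IsPortrait i n PP} =
      ((n + 1) * i).choose i / (n * i + 1) := by 
  have e1 : Nat.card {PP : Finset (Finset (Fin (i * n))) // IsPortrait i n PP} =
      (GS (fun b => n ∣ b) (i * n) 0).card := by
    rw [← card_GoodP _ _ (dvd_zero n)]
    exact Nat.card_congr (Equiv.subtypeEquivRight (portrait_iff i n hn))
  have e2 : Nat.card {QQ : Finset (Finset (Fin (i * (n + 1)))) //
        IsPortrait i (n + 1) QQ ∧ ∀ S ∈ QQ, S.card = n + 1} =
      (GS (fun b => b = 0 ∨ b = n+1) (i * (n+1)) 0).card := by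
    rw [← card_GoodP _ _ (Or.inl rfl)]
    exact Nat.card_congr (Equiv.subtypeEquivRight (portrait_iff_one i n hn))
  have c1 := card_GS_dvd n (by omega) (i * n) 0 i (by ring)
  have c2 := card_GS_one n (i * (n+1)) 0 i (i * n) (by ring) (by ring)
  rw [e1, e2]
  refine ⟨by exact_mod_cast c1.trans c2.symm, ?_⟩
  have c3 := VB_final n i
  rw [mul_comm n i, ← c1] at c3
  rw [mul_comm n i]
  symm
  apply Nat.div_eq_of_eq_mul_right (by omega)
  exact_mod_cast c3.symm
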